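/- arXiv:2009.09554 — 2 statements merged into one kernel-verified Lean document; each statement's English description precedes it below -/
import Mathlib

section
/- Let ψ₁, …, ψₙ be real-valued random variables on a probability space (Ω, 𝔽, ℙ), let δ ∈ [0, 1], let κ ≥ 0, and let f₁, …, fₙ ≥ 0 and β₁, …, βₙ ≥ 0 satisfy ∑_{i=1}^{n} βᵢ = 1. If ℙ(|ψᵢ| ≤ fᵢ) ≥ 1 − βᵢ δ for every i = 1, …, n, and ∑_{i=1}^{n} fᵢ² ≤ κ², then ℙ(∑_{i=1}^{n} ψᵢ² ≤ κ²) ≥ 1 − δ. -/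
open MeasureTheory

/-- Proposition 1: a quadratic chance constraint `ℙ(∑ᵢ ψᵢ² ≤ κ²) ≥ 1 − δ` is
conservatively guaranteed by two-sided (absolute value) chance constraints
`ℙ(|ψᵢ| ≤ fᵢ) ≥ 1 − βᵢδ` with `∑ᵢ βᵢ = 1` and `∑ᵢ fᵢ² ≤ κ²`. -/
theorem quadratic_from_two_sided {Ω : Type*} [MeasurableSpace Ω]
    (P : Measure Ω) [IsProbabilityMeasure P] (n : ℕ)
    (ψ : Fin n → Ω → ℝ) (hψ : ∀ i, Measurable (ψ i))
    (δ κ : ℝ) (hδ0 : 0 ≤ δ) (hδ1 : δ ≤ 1) (hκ : 0 ≤ κ)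
    (f β : Fin n → ℝ) (hf : ∀ i, 0 ≤ f i) (hβ : ∀ i, 0 ≤ β i)
    (hβsum : ∑ i, β i = 1)
    (h : ∀ i, 1 - β i * δ ≤ (P {ω | |ψ i ω| ≤ f i}).toReal)
    (hfsum : ∑ i, (f i) ^ 2 ≤ κ ^ 2) :
    1 - δ ≤ (P {ω | ∑ i, (ψ i ω) ^ 2 ≤ κ ^ 2}).toReal := by
  change 1 - δ ≤ P.real {ω | ∑ i, (ψ i ω) ^ 2 ≤ κ ^ 2}
  have h' : ∀ i, P.real {ω | |ψ i ω| ≤ f i}ᶜ ≤ β i * δ := by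
    intro i
    have hm : MeasurableSet {ω | |ψ i ω| ≤ f i} :=
      measurableSet_le (by simpa using (hψ i).norm) measurable_const
    have h1 : 1 - β i * δ ≤ P.real {ω | |ψ i ω| ≤ f i} := h i
    rw [probReal_compl_eq_one_sub hm]
    linarith
  have hM : MeasurableSet {ω | ∑ i, (ψ i ω) ^ 2 ≤ κ ^ 2} :=
    measurableSet_le (Finset.measurable_sum _ fun i _ => (hψ i).pow_const 2) measurable_const
  have hsub : {ω | ∑ i, (ψ i ω) ^ 2 ≤ κ ^ 2}ᶜ ⊆ ⋃ i, {ω | |ψ i ω| ≤ f i}ᶜ := by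
    intro ω hω
    by_contra hc
    simp only [Set.mem_iUnion, Set.mem_compl_iff, Set.mem_setOf_eq, not_exists, not_not] at hc
    apply hω
    refine le_trans (Finset.sum_le_sum fun i _ => ?_) hfsum
    exact sq_le_sq' (abs_le.mp (hc i)).1 (abs_le.mp (hc i)).2
  have h2 : P.real {ω | ∑ i, (ψ i ω) ^ 2 ≤ κ ^ 2}ᶜ ≤ δ := by
    calc _ ≤ P.real (⋃ i, {ω | |ψ i ω| ≤ f i}ᶜ) := measureReal_mono hsub
      _ ≤ ∑ i, P.real {ω | |ψ i ω| ≤ f i}ᶜ := measureReal_iUnion_fintype_le _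
      _ ≤ ∑ i, β i * δ := Finset.sum_le_sum fun i _ => h' i
      _ = δ := by rw [← Finset.sum_mul, hβsum, one_mul]
  rw [probReal_compl_eq_one_sub hM] at h2
  linarith
end

section
/- Let ξ be a random vector in ℝ² distributed according to the multivariate Gaussian measure with mean ξ̄ ∈ ℝ² and positive definite covariance matrix Σ_ξ ∈ ℝ^{2×2}, let σ_ξ² = λ_max(Σ_ξ) be the largest eigenvalue of Σ_ξ, let r > 0, and let δ ∈ (0, 1). If ‖ξ̄‖₂ + σ_ξ √(2 log(1/δ)) ≤ r, then ℙ(‖ξ‖₂ ≤ r) ≥ 1 − δ. -/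
open MeasureTheory Matrix Real

/-- The multivariate Gaussian measure on `ℝⁿ` with mean `m` and (positive
definite) covariance matrix `S`, defined via its density with respect to
Lebesgue measure. -/
noncomputable def multivariateGaussian {n : ℕ} (m : Fin n → ℝ)
    (S : Matrix (Fin n) (Fin n) ℝ) : Measure (Fin n → ℝ) :=
  volume.withDensity fun x =>
    ENNReal.ofReal ((Real.sqrt ((2 * π) ^ n * S.det))⁻¹ *
      Real.exp (-((x - m) ⬝ᵥ (S⁻¹ *ᵥ (x - m))) / 2))

open scoped Pointwise

lemma vol_scale (q : (Fin 2 → ℝ) → ℝ) (hom : ∀ (a : ℝ) x, q (a • x) = a ^ 2 * q x)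
    (h0 : ∀ x, q x ≤ 0 → x = 0) (s : ℝ) (hs : 0 ≤ s) :
    volume {x | q x ≤ s} = ENNReal.ofReal s * volume {x | q x ≤ 1} := by
  rcases hs.eq_or_lt with rfl | hs
  · have : {x | q x ≤ 0} ⊆ {0} := fun x hx => h0 x hx
    rw [measure_mono_null this (measure_singleton _)]
    simp
  · have hq : 0 < √s := Real.sqrt_pos.2 hs
    have : {x | q x ≤ s} = √s • {x | q x ≤ 1} := by
      ext x
      rw [Set.mem_smul_set_iff_inv_smul_mem₀ hq.ne']
      simp only [Set.mem_ofPred_eq, hom, inv_pow, Real.sq_sqrt hs.le]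
      rw [inv_mul_le_iff₀ hs, mul_one]
    rw [this, Measure.addHaar_smul]
    simp [Real.sq_sqrt hs.le, abs_of_pos hs]

lemma exp_tail (a : ℝ) :
    ∫⁻ s in Set.Ici a, ENNReal.ofReal (1 / 2 * exp (-s / 2)) = ENNReal.ofReal (exp (-a / 2)) := by
  have e : ∀ s : ℝ, 1 / 2 * exp (-s / 2) = 1 / 2 * exp ((-1 / 2) * s) := by
    intro s; ring_nf
  simp_rw [e]
  rw [setLIntegral_congr Ioi_ae_eq_Ici.symm, ← ofReal_integral_eq_lintegral_ofReal]
  · rw [integral_const_mul, integral_exp_mul_Ioi (by norm_num)]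
    congr 1; ring_nf
  · exact (integrableOn_exp_mul_Ioi (by norm_num) a).const_mul _
  · filter_upwards with s; positivity

lemma gauss_tail (q : (Fin 2 → ℝ) → ℝ) (hm : Measurable q)
    (hom : ∀ (a : ℝ) x, q (a • x) = a ^ 2 * q x)
    (h0 : ∀ x, q x ≤ 0 → x = 0) (hfin : volume {x | q x ≤ 1} ≠ ⊤) (t : ℝ) (ht : 0 ≤ t) :
    ∫⁻ x, {x | t < q x}.indicator (fun x => ENNReal.ofReal (exp (-q x / 2))) x =
      ENNReal.ofReal (exp (-t / 2)) *
        ∫⁻ u, ENNReal.ofReal (1 / 2 * exp (-u / 2)) *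
          (ENNReal.ofReal u * volume {x | q x ≤ 1}) := by
  have e1 : ∀ x, {x | t < q x}.indicator (fun x => ENNReal.ofReal (exp (-q x / 2))) x =
      ∫⁻ s, ENNReal.ofReal (1 / 2 * exp (-s / 2)) *
        {p : (Fin 2 → ℝ) × ℝ | t < q p.1 ∧ q p.1 ≤ p.2}.indicator 1 (x, s) := by
    intro x
    by_cases hx : t < q x
    · rw [Set.indicator_of_mem (by exact hx), ← exp_tail, ← lintegral_indicator measurableSet_Ici]
      congr 1; ext s
      by_cases hs : q x ≤ s <;> simp [Set.indicator, hx, hs]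
    · simp [Set.indicator, hx]
  have hms : MeasurableSet {p : (Fin 2 → ℝ) × ℝ | t < q p.1 ∧ q p.1 ≤ p.2} :=
    (measurableSet_lt measurable_const (hm.comp measurable_fst)).inter
      (measurableSet_le (hm.comp measurable_fst) measurable_snd)
  simp_rw [e1]
  rw [lintegral_lintegral_swap]
  swap
  · refine Measurable.aemeasurable (Measurable.mul (by fun_prop) ?_)
    exact (measurable_one.indicator hms)
  have e2 : ∀ s : ℝ, ∫⁻ x, ENNReal.ofReal (1 / 2 * exp (-s / 2)) *
        {p : (Fin 2 → ℝ) × ℝ | t < q p.1 ∧ q p.1 ≤ p.2}.indicator 1 (x, s) =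
      ENNReal.ofReal (1 / 2 * exp (-s / 2)) *
          (ENNReal.ofReal (s - t) * volume {x | q x ≤ 1}) := by
    intro s
    rw [lintegral_const_mul' _ _ ENNReal.ofReal_ne_top]
    congr 1
    have : ∀ x, {p : (Fin 2 → ℝ) × ℝ | t < q p.1 ∧ q p.1 ≤ p.2}.indicator
        (1 : (Fin 2 → ℝ) × ℝ → ENNReal) (x, s) = ({x | q x ≤ s} \ {x | q x ≤ t}).indicator 1 x := by
      intro x
      simp [Set.indicator, and_comm]
    simp_rw [this]
    have hmm : ∀ s, MeasurableSet {x | q x ≤ s} := fun s => measurableSet_le hm measurable_const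
    rw [lintegral_indicator_one ((hmm s).diff (hmm t))]
    rcases le_total s t with h | h
    · have : {x | q x ≤ s} \ {x | q x ≤ t} = ∅ := by
        ext x; simp; intro h'; linarith
      rw [this, ENNReal.ofReal_of_nonpos (by linarith)]; simp
    · have hv := vol_scale q hom h0
      have hst : {x | q x ≤ t} ⊆ {x | q x ≤ s} := fun x (hx : q x ≤ t) => le_trans hx h
      rw [measure_sdiff hst (hmm t).nullMeasurableSet, hv s (ht.trans h), hv t ht,
        ENNReal.ofReal_sub _ ht, ENNReal.sub_mul]
      · intros; exact hfin
      · rw [hv t ht]; exact ENNReal.mul_ne_top ENNReal.ofReal_ne_top hfin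
  simp_rw [e2]
  rw [← lintegral_const_mul' _ _ ENNReal.ofReal_ne_top]
  refine Eq.trans ?_ (lintegral_sub_right_eq_self _ t)
  congr 1; ext s
  rw [← mul_assoc (ENNReal.ofReal (exp (-t / 2))), ← ENNReal.ofReal_mul (exp_pos _).le]
  congr 2
  rw [mul_left_comm, ← exp_add]; ring_nf

lemma eig_bound (S : Matrix (Fin 2) (Fin 2) ℝ) (hS : S.PosDef) (y : Fin 2 → ℝ) :
    ∑ i, y i ^ 2 ≤ (⨆ i, hS.1.eigenvalues i) * (y ⬝ᵥ (S⁻¹ *ᵥ y)) := by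
  set σ := ⨆ i, hS.1.eigenvalues i
  have hle : ∀ i, hS.1.eigenvalues i ≤ σ := fun i => le_ciSup (Set.finite_range _).bddAbove i
  set U : Matrix (Fin 2) (Fin 2) ℝ := hS.1.eigenvectorUnitary.1
  set d := hS.1.eigenvalues
  have hd : ∀ i, 0 < d i := hS.eigenvalues_pos
  have hU1 : U * Uᵀ = 1 := by
    simpa [star_eq_conjTranspose, conjTranspose_eq_transpose_of_trivial] using Unitary.coe_mul_star_self hS.1.eigenvectorUnitary
  have hU2 : Uᵀ * U = 1 := by
    simpa [star_eq_conjTranspose, conjTranspose_eq_transpose_of_trivial] using Unitary.coe_star_mul_self hS.1.eigenvectorUnitary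
  have hsp : S = U * diagonal d * Uᵀ := by
    have := hS.1.spectral_theorem
    simpa [Unitary.conjStarAlgAut_apply, star_eq_conjTranspose, conjTranspose_eq_transpose_of_trivial, Function.comp_def] using this
  have hinv : S⁻¹ = U * diagonal (fun i => (d i)⁻¹) * Uᵀ := by
    apply Matrix.inv_eq_right_inv
    calc S * (U * diagonal (fun i => (d i)⁻¹) * Uᵀ)
        = U * diagonal d * (Uᵀ * U) * diagonal (fun i => (d i)⁻¹) * Uᵀ := by
          rw [hsp]; simp only [Matrix.mul_assoc]
      _ = 1 := by
          rw [hU2, Matrix.mul_one, Matrix.mul_assoc U, diagonal_mul_diagonal]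
          simp [(hd _).ne', hU1]
  set w := Uᵀ *ᵥ y
  have h1 : y ⬝ᵥ (S⁻¹ *ᵥ y) = ∑ i, (d i)⁻¹ * w i ^ 2 := by
    rw [hinv, ← mulVec_mulVec, ← mulVec_mulVec, dotProduct_mulVec, ← mulVec_transpose]
    change w ⬝ᵥ (_ *ᵥ w) = _
    simp only [dotProduct, mulVec_diagonal]
    exact Finset.sum_congr rfl fun i _ => by ring
  have h2 : ∑ i, y i ^ 2 = ∑ i, w i ^ 2 := by
    have : w ⬝ᵥ w = y ⬝ᵥ y := by
      change w ⬝ᵥ (Uᵀ *ᵥ y) = _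
      rw [dotProduct_mulVec, ← mulVec_transpose, transpose_transpose]
      change (U *ᵥ (Uᵀ *ᵥ y)) ⬝ᵥ y = _
      rw [mulVec_mulVec, hU1, one_mulVec]
    simpa [dotProduct, sq] using this.symm
  rw [h1, h2, Finset.mul_sum]
  refine Finset.sum_le_sum fun i _ => ?_
  rw [← mul_assoc]
  refine le_mul_of_one_le_left (sq_nonneg _) ?_
  rw [← div_eq_mul_inv, one_le_div (hd i)]
  exact hle i

/-- Theorem 2: for `ξ ~ N(ξ̄, Σ_ξ)` in `ℝ²` with `Σ_ξ` positive definite,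
`σ_ξ² = λ_max(Σ_ξ)`, `r > 0`, `δ ∈ (0,1)`: if
`‖ξ̄‖₂ + σ_ξ √(2 log(1/δ)) ≤ r` then `ℙ(‖ξ‖₂ ≤ r) ≥ 1 − δ`. -/
theorem gaussian_disk_chance_constraint {Ω : Type*} [MeasurableSpace Ω]
    (P : Measure Ω) [IsProbabilityMeasure P]
    (ξbar : Fin 2 → ℝ) (S : Matrix (Fin 2) (Fin 2) ℝ) (hS : S.PosDef)
    (ξ : Ω → Fin 2 → ℝ) (hξ : Measurable ξ)
    (hlaw : Measure.map ξ P = multivariateGaussian ξbar S)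
    (σsq : ℝ) (hσsq : σsq = ⨆ i, hS.1.eigenvalues i)
    (r : ℝ) (hr : 0 < r) (δ : ℝ) (hδ : δ ∈ Set.Ioo (0 : ℝ) 1)
    (hcond : Real.sqrt (∑ i, (ξbar i) ^ 2) +
      Real.sqrt σsq * Real.sqrt (2 * Real.log (1 / δ)) ≤ r) :
    1 - δ ≤ (P {ω | Real.sqrt (∑ i, (ξ ω i) ^ 2) ≤ r}).toReal := by
  set q : (Fin 2 → ℝ) → ℝ := fun y => y ⬝ᵥ (S⁻¹ *ᵥ y) with hq
  have hbound : ∀ y, ∑ i, y i ^ 2 ≤ σsq * q y := by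
    intro y; rw [hσsq]; exact eig_bound S hS y
  have hσ : 0 < σsq := by
    rw [hσsq]
    exact (hS.eigenvalues_pos 0).trans_le (le_ciSup (Set.finite_range _).bddAbove 0)
  have hcont : Continuous q := by
    simp only [hq, dotProduct, mulVec]
    fun_prop
  have hm : Measurable q := hcont.measurable
  have hom : ∀ (a : ℝ) x, q (a • x) = a ^ 2 * q x := by
    intro a x
    simp only [hq, mulVec_smul, dotProduct_smul, smul_dotProduct, smul_eq_mul]
    ring
  have h0 : ∀ x, q x ≤ 0 → x = 0 := by
    intro x hx
    have h1 := hbound x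
    have h2 : ∑ i, x i ^ 2 ≤ 0 := h1.trans (mul_nonpos_of_nonneg_of_nonpos hσ.le hx)
    have h3 := (Finset.sum_eq_zero_iff_of_nonneg (fun i _ => sq_nonneg (x i))).1
      (le_antisymm h2 (Finset.sum_nonneg fun i _ => sq_nonneg (x i)))
    ext i
    simpa using h3 i (Finset.mem_univ i)
  have hfin : volume {x | q x ≤ 1} ≠ ⊤ := by
    have hsub : {x | q x ≤ 1} ⊆ Metric.closedBall 0 (√σsq) := by
      intro x hx
      rw [mem_closedBall_zero_iff, pi_norm_le_iff_of_nonneg (Real.sqrt_nonneg _)]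
      intro i
      rw [Real.norm_eq_abs]
      apply Real.abs_le_sqrt
      have h1 : x i ^ 2 ≤ ∑ i, x i ^ 2 :=
        Finset.single_le_sum (f := fun i => x i ^ 2) (fun i _ => sq_nonneg (x i))
          (Finset.mem_univ i)
      have h2 : σsq * q x ≤ σsq * 1 := mul_le_mul_of_nonneg_left hx hσ.le
      linarith [hbound x]
    exact ((measure_mono hsub).trans_lt measure_closedBall_lt_top).ne
  have hA : ∀ t : ℝ, MeasurableSet {x : Fin 2 → ℝ | t < q (x - ξbar)} := fun t =>
    measurableSet_lt measurable_const (hm.comp (measurable_id.sub_const _))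
  obtain ⟨c, hc0, hc⟩ : ∃ c : ℝ, 0 ≤ c ∧ c = (Real.sqrt ((2 * π) ^ 2 * S.det))⁻¹ :=
    ⟨_, by positivity, rfl⟩
  set K := ∫⁻ u, ENNReal.ofReal (1 / 2 * exp (-u / 2)) *
          (ENNReal.ofReal u * volume {x | q x ≤ 1})
  have hmass : ∀ t : ℝ, 0 ≤ t → P (ξ ⁻¹' {x | t < q (x - ξbar)}) =
      ENNReal.ofReal (exp (-t / 2)) * (ENNReal.ofReal c * K) := by
    intro t ht
    rw [← Measure.map_apply hξ (hA t), hlaw, multivariateGaussian, withDensity_apply _ (hA t),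
      ← lintegral_indicator (hA t), mul_left_comm, ← gauss_tail q hm hom h0 hfin t ht,
      ← lintegral_const_mul' _ _ ENNReal.ofReal_ne_top]
    refine Eq.trans ?_ (lintegral_sub_right_eq_self _ ξbar)
    congr 1; ext x
    by_cases hx : t < q (x - ξbar)
    · rw [Set.indicator_of_mem (by exact hx), Set.indicator_of_mem (by exact hx),
        ← ENNReal.ofReal_mul hc0, hc]
    · rw [Set.indicator_of_notMem (by exact hx), Set.indicator_of_notMem (by exact hx), mul_zero]
  have hK : ENNReal.ofReal c * K ≤ 1 := by
    have h1 := hmass 0 le_rfl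
    simp only [neg_zero, zero_div, exp_zero, ENNReal.ofReal_one, one_mul] at h1
    rw [← h1]; exact prob_le_one
  obtain ⟨hδ0, hδ1⟩ := hδ
  set t := 2 * Real.log (1 / δ) with ht
  have ht0 : 0 ≤ t := by
    have : 0 ≤ Real.log (1 / δ) := Real.log_nonneg (by rw [le_div_iff₀ hδ0]; linarith)
    positivity
  have htδ : exp (-t / 2) = δ := by
    rw [ht, one_div, Real.log_inv]
    rw [show -(2 * -Real.log δ) / 2 = Real.log δ by ring, Real.exp_log hδ0]
  have hbad : P (ξ ⁻¹' {x | t < q (x - ξbar)}) ≤ ENNReal.ofReal δ := by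
    rw [hmass t ht0, htδ]
    exact mul_le_of_le_one_right' hK
  have hsub : (ξ ⁻¹' {x | t < q (x - ξbar)})ᶜ ⊆ {ω | Real.sqrt (∑ i, (ξ ω i) ^ 2) ≤ r} := by
    intro ω hω
    have hω' : q (ξ ω - ξbar) ≤ t := not_lt.1 hω
    have h1 : √(∑ i, (ξ ω - ξbar) i ^ 2) ≤ √σsq * √t := by
      rw [← Real.sqrt_mul hσ.le]
      exact Real.sqrt_le_sqrt ((hbound _).trans (mul_le_mul_of_nonneg_left hω' hσ.le))
    have h2 := norm_add_le (WithLp.toLp 2 ξbar : EuclideanSpace ℝ (Fin 2))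
      (WithLp.toLp 2 (ξ ω - ξbar))
    rw [← WithLp.toLp_add, add_sub_cancel] at h2
    simp only [EuclideanSpace.norm_eq, Real.norm_eq_abs, sq_abs] at h2
    exact h2.trans (le_trans (by gcongr) hcond)
  have hB : MeasurableSet (ξ ⁻¹' {x | t < q (x - ξbar)}) := hξ (hA t)
  have h3 : P.real (ξ ⁻¹' {x | t < q (x - ξbar)}) ≤ δ := ENNReal.toReal_le_of_le_ofReal hδ0.le hbad
  have h4 := probReal_compl_eq_one_sub (μ := P) hB
  have h5 := measureReal_mono (μ := P) hsub
  change 1 - δ ≤ P.real _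
  linarith
end
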